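/- Let d ≥ 1, r ≥ 0, and let B be a bijective filling of D(Z(d,r)) with 1, …, d(d+r). For α in the image of f write b(α) = B(f^{−1}(α)), and for β in the image of f̃ write b̃(β) = B̃(f̃^{−1}(β)) (so b̃(2e_m) = B(d+1−m, 0) and b̃ agrees with b on the image of f). Say x lies between y and z if min(y,z) < x < max(y,z). Then B is a balanced shifted tableau of shape Z(d,r) if and only if all of the following hold: (1) for all 1 ≤ j < k < i ≤ d, b(e_i − e_j) lies between b(e_i − e_k) and b(e_k − e_j); (2) for all 1 ≤ i ≤ d < p ≤ d+r: (a) b(e_i + e_p) < b(e_i + e_q) for all p < q ≤ d+r, and (b) b(e_i + e_p) lies between b(e_i − e_k) and b(e_k + e_p) for all 1 ≤ k < i; (3) for all 1 ≤ i ≤ d: (a) b(e_i) < b(e_i + e_q) for all d < q ≤ d+r, and (b) b(e_i) lies between b(e_i − e_k) and b(e_k) for all 1 ≤ k < i; (4) for all 1 ≤ j < i ≤ d: (a) b(e_i + e_j) < b(e_i + e_q) for all d < q ≤ d+r, (b) b(e_i + e_j) < b(e_j + e_q) for all d < q ≤ d+r, and (c) b(e_i + e_j) lies between b̃(e_i −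 e_k) and b̃(e_j + e_k) for every integer k with −j < k < i (using the conventions e_0 = 0 and e_{−m} = −e_m). -/

import Mathlib

open scoped BigOperators

namespace BST

/-- `lam` (1-indexed, with `d` parts) is a strict partition: strictly decreasing
positive parts `lam 1 > lam 2 > ⋯ > lam d > 0`. -/
def IsStrictPartition (d : ℕ) (lam : ℕ → ℕ) : Prop :=
  (∀ i : ℕ, 1 ≤ i → i < d → lam (i + 1) < lam i) ∧ 1 ≤ lam d

/-- The size `|λ| = λ_1 + ⋯ + λ_d`. -/
def sizeP (d : ℕ) (lam : ℕ → ℕ) : ℕ := ∑ i ∈ Finset.Icc 1 d, lam i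

/-- The shifted diagram `D(λ) ⊆ ℤ × ℤ`: row `i` (1 ≤ i ≤ d) occupies columns
`i - d, …, λ_i + i - d - 1`. -/
def Diagram (d : ℕ) (lam : ℕ → ℕ) : Set (ℤ × ℤ) :=
  {p : ℤ × ℤ | 1 ≤ p.1 ∧ p.1 ≤ (d : ℤ) ∧ p.1 - (d : ℤ) ≤ p.2 ∧
    p.2 + (d : ℤ) + 1 ≤ (lam p.1.toNat : ℤ) + p.1}

/-- The hook `H(i,c)`. -/
def Hook (d : ℕ) (lam : ℕ → ℕ) (i c : ℤ) : Set (ℤ × ℤ) :=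
  {(i, c)} ∪ {p ∈ Diagram d lam | (p.1 = i ∧ c < p.2) ∨ (p.2 = c ∧ i < p.1)} ∪
    {p ∈ Diagram d lam | c < 0 ∧ p.1 = (d : ℤ) + 1 + c}

/-- The extended hook `H̃(i,c)`. -/
def ExtHook (d : ℕ) (lam : ℕ → ℕ) (i c : ℤ) : Set (ℤ × ℤ) :=
  Hook d lam i c ∪ {p : ℤ × ℤ | c < 0 ∧ p = ((d : ℤ) + 1 + c, c)}

/-- The extended diagram `D(λ) ∪ {(i, i - d - 1) : 1 ≤ i ≤ d}`. -/
def ExtDiagram (d : ℕ) (lam : ℕ → ℕ) : Set (ℤ × ℤ) :=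
  Diagram d lam ∪ {p : ℤ × ℤ | 1 ≤ p.1 ∧ p.1 ≤ (d : ℤ) ∧ p.2 = p.1 - ((d : ℤ) + 1)}

/-- The extended filling `B̃`, with `B̃(i, i - d - 1) = B(i, 0)`. -/
def ExtFilling (d : ℕ) (B : ℤ × ℤ → ℕ) : ℤ × ℤ → ℕ :=
  fun p => if p.2 = p.1 - ((d : ℤ) + 1) then B (p.1, 0) else B p

/-- The rank function `rk(i,c)`. -/
def rk (d : ℕ) (lam : ℕ → ℕ) (i c : ℤ) : ℤ :=
  if 0 ≤ c then (lam i.toNat : ℤ) - d + i - c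
  else (lam i.toNat : ℤ) - d + i + (lam ((d : ℤ) + 1 + c).toNat : ℤ) + c + 1

/-- A bijective filling of `D(λ)` with `1, …, |λ|` (normalized to be `0` off the diagram). -/
def IsFilling (d : ℕ) (lam : ℕ → ℕ) (B : ℤ × ℤ → ℕ) : Prop :=
  Set.BijOn B (Diagram d lam) (Set.Icc 1 (sizeP d lam)) ∧
    ∀ p : ℤ × ℤ, p ∉ Diagram d lam → B p = 0

/-- A balanced shifted tableau: a bijective filling such that at each box `(i,c)`,
`B(i,c)` is the `rk(i,c)`-th largest entry of the multiset of values of `B̃` on the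
extended hook, i.e. exactly `rk(i,c) - 1` boxes of the extended hook carry a value
strictly larger than `B(i,c)`. -/
def IsBalanced (d : ℕ) (lam : ℕ → ℕ) (B : ℤ × ℤ → ℕ) : Prop :=
  IsFilling d lam B ∧ ∀ p ∈ Diagram d lam,
    ({q ∈ ExtHook d lam p.1 p.2 | B p < ExtFilling d B q}.ncard : ℤ) =
      rk d lam p.1 p.2 - 1

/-- A standard Young tableau of shifted shape `λ`. -/
def IsSYT (d : ℕ) (lam : ℕ → ℕ) (B : ℤ × ℤ → ℕ) : Prop :=
  IsFilling d lam B ∧ ∀ p ∈ Diagram d lam, ∀ q ∈ Diagram d lam,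
    ((p.1 = q.1 ∧ p.2 < q.2) → B p < B q) ∧ ((p.2 = q.2 ∧ p.1 < q.1) → B p < B q)

/-- The simple reflections of `W(B_n)`, acting on `ℤ`: `s 0` swaps `1 ↔ -1`,
and `s a` (for `a ≥ 1`) swaps `a ↔ a+1` and `-a ↔ -(a+1)`. -/
def sB (a : ℕ) : Equiv.Perm ℤ :=
  if a = 0 then Equiv.swap 1 (-1)
  else Equiv.swap (a : ℤ) ((a : ℤ) + 1) * Equiv.swap (-(a : ℤ)) (-(a : ℤ) - 1)

/-- The product `s_{a_1} s_{a_2} ⋯ s_{a_m}` of a word. -/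
def wordProd (L : List ℕ) : Equiv.Perm ℤ := (L.map sB).prod

/-- A signed permutation in `W(B_n)`: odd, and the identity beyond `n`. -/
def IsSignedPerm (n : ℕ) (w : Equiv.Perm ℤ) : Prop :=
  (∀ i : ℤ, w (-i) = -(w i)) ∧ ∀ i : ℤ, (n : ℤ) < |i| → w i = i

/-- The Coxeter length of `w` in `W(B_n)`. -/
noncomputable def lengthB (n : ℕ) (w : Equiv.Perm ℤ) : ℕ :=
  sInf {m : ℕ | ∃ L : List ℕ, (∀ a ∈ L, a < n) ∧ wordProd L = w ∧ L.length = m}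

/-- `L` is a reduced word of `w` in `W(B_n)`. -/
def IsReducedWord (n : ℕ) (w : Equiv.Perm ℤ) (L : List ℕ) : Prop :=
  (∀ a ∈ L, a < n) ∧ wordProd L = w ∧ L.length = lengthB n w

/-- The vector `e_k` (for `k ≥ 1` the `k`-th standard basis vector, with the
conventions `e 0 = 0` and `e (-k) = - e k`), represented as an odd function `ℤ → ℤ`. -/
def eVec (k : ℤ) : ℤ → ℤ :=
  fun t => if t = 0 then 0 else if t = k then 1 else if t = -k then -1 else 0

/-- The positive roots of type `B_n`. -/
def PosRoots (n : ℕ) : Set (ℤ → ℤ) :=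
  {v | (∃ i j : ℤ, 1 ≤ i ∧ i < j ∧ j ≤ (n : ℤ) ∧
        (v = eVec j - eVec i ∨ v = eVec j + eVec i)) ∨
       (∃ i : ℤ, 1 ≤ i ∧ i ≤ (n : ℤ) ∧ v = eVec i)}

/-- The action of a signed permutation on vectors: `w · e_i = e_{w(i)}`. -/
def actB (w : Equiv.Perm ℤ) (v : ℤ → ℤ) : ℤ → ℤ := fun t => v (w⁻¹ t)

/-- The inversion set `Inv(w) = {α ∈ Φ⁺ : w⁻¹ · α ∈ -Φ⁺}`. -/
def InvSet (n : ℕ) (w : Equiv.Perm ℤ) : Set (ℤ → ℤ) :=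
  {α | α ∈ PosRoots n ∧ -(actB w⁻¹ α) ∈ PosRoots n}

/-- The simple roots: `α_0 = e_1` and `α_a = e_{a+1} - e_a` for `a ≥ 1`. -/
def alphaRoot (a : ℕ) : ℤ → ℤ :=
  if a = 0 then eVec 1 else eVec ((a : ℤ) + 1) - eVec (a : ℤ)

/-- The reflection order of a word: `reflOrder L t = γ_{t+1} = s_{a_1} ⋯ s_{a_t} · α_{a_{t+1}}`
(0-indexed). -/
def reflOrder (L : List ℕ) (t : ℕ) : ℤ → ℤ :=
  actB (wordProd (L.take t)) (alphaRoot (L.getD t 0))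

/-- The trapezoid `Z(d,r) = (r+2d-1, r+2d-3, …, r+1)`. -/
def Zlam (d r : ℕ) : ℕ → ℕ := fun i => r + 2 * d + 1 - 2 * i

/-- The labeling `f : D(Z(d,r)) → Φ⁺`. -/
def fLabel (d r : ℕ) (p : ℤ × ℤ) : ℤ → ℤ :=
  if p.2 ≤ 0 then eVec ((d : ℤ) + 1 - p.1) - eVec p.2
  else if p.2 ≤ (r : ℤ) then eVec ((d : ℤ) + 1 - p.1) + eVec (p.2 + (d : ℤ))
  else eVec ((d : ℤ) + 1 - p.1) - eVec (p.2 - (r : ℤ))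

/-- The extended labeling `f̃`, with `f̃(i, i - d - 1) = 2 e_{d+1-i}`. -/
def fExtLabel (d r : ℕ) (p : ℤ × ℤ) : ℤ → ℤ :=
  if p.2 = p.1 - ((d : ℤ) + 1) then (2 : ℤ) • eVec ((d : ℤ) + 1 - p.1)
  else fLabel d r p

/-- `w` is the signed permutation `w^{(d,r)} ∈ W(B_{d+r})`, i.e.
`w(i) = d + i` for `1 ≤ i ≤ r` and `w(i) = -(i - r)` for `r < i ≤ d + r`. -/
def IsWdr (d r : ℕ) (w : Equiv.Perm ℤ) : Prop :=
  IsSignedPerm (d + r) w ∧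
    (∀ i : ℤ, 1 ≤ i → i ≤ (r : ℤ) → w i = (d : ℤ) + i) ∧
    (∀ i : ℤ, (r : ℤ) < i → i ≤ (d : ℤ) + (r : ℤ) → w i = -(i - r))


/-- `x` lies strictly between `y` and `z` (i.e. `min(y,z) < x < max(y,z)`). -/
def Between (x y z : ℕ) : Prop := (y < x ∧ x < z) ∨ (z < x ∧ x < y)

/-- A nonempty list is unimodal: strictly decreasing down to its minimum
(at 0-indexed position `k`), then strictly increasing. -/
def Unimodal (L : List ℕ) : Prop :=
  ∃ k : ℕ, k < L.length ∧
    (∀ a b : ℕ, a < b → b ≤ k → L.getD b 0 < L.getD a 0) ∧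
    (∀ a b : ℕ, k ≤ a → a < b → b < L.length → L.getD a 0 < L.getD b 0)

/-- Row `i` of the distinguished tableau of shape `Z(d,r)`:
`(r+d-i, …, r+1, 0, 1, …, r+d-i)`. -/
def rowWord (d r i : ℕ) : List ℕ :=
  (List.range (r + 2 * (d - i) + 1)).map fun t =>
    if t < d - i then r + (d - i) - t else t - (d - i)

/-- The reading word `π(T) = T_d T_{d-1} ⋯ T_1` of the distinguished tableau of
shape `Z(d,r)`. -/
def piWord (d r : ℕ) : List ℕ :=
  (List.range d).flatMap fun k => rowWord d r (d - k)

/-- `μ_i = Z(d,r)_i - λ_i`. -/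
def muF (d r : ℕ) (lam : ℕ → ℕ) (i : ℕ) : ℕ := r + 2 * d + 1 - 2 * i - lam i

/-- `σ_i = μ_1 + ⋯ + μ_i`. -/
def sigmaF (d r : ℕ) (lam : ℕ → ℕ) (i : ℕ) : ℕ := ∑ t ∈ Finset.Icc 1 i, muF d r lam t

/-- `ν_i = min{μ_i, …, μ_d}`. -/
noncomputable def nuF (d r : ℕ) (lam : ℕ → ℕ) (i : ℕ) : ℕ :=
  sInf {m : ℕ | ∃ j : ℕ, i ≤ j ∧ j ≤ d ∧ m = muF d r lam j}

/-- The word `a^λ`: the concatenation over `i = 1, …, d` of the increasing runs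
`(d+r-i-μ_i+1, …, d+r-i)`. -/
def aLamWord (d r : ℕ) (lam : ℕ → ℕ) : List ℕ :=
  (List.range d).flatMap fun k =>
    (List.range (muF d r lam (k + 1))).map fun t =>
      d + r - (k + 1) - muF d r lam (k + 1) + 1 + t

/-- Row `i` of the tableau `P(w^λ)`: entries `P(i,c) = c` for `c ≥ 0` and
`P(i,c) = r - c - ν_{d+1+c}` for `c < 0`. -/
noncomputable def rowWordP (d r : ℕ) (lam : ℕ → ℕ) (i : ℕ) : List ℕ :=
  (List.range (lam i)).map fun t =>
    if t < d - i then r + (d - i) - t - nuF d r lam (i + 1 + t) else t - (d - i)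

/-- The reading word `π(P(w^λ))`. -/
noncomputable def piWordP (d r : ℕ) (lam : ℕ → ℕ) : List ℕ :=
  (List.range d).flatMap fun k => rowWordP d r lam (d - k)

/-- The shape obtained from `λ` by adding one box at the end of row `i`. -/
def stepShape (lam : ℕ → ℕ) (i : ℕ) : ℕ → ℕ :=
  fun t => if t = i then lam i + 1 else lam t

/-- The box-adding map `f_i` on fillings: swap columns `j = λ_i + i - d` and `j + 1`
(in rows `1, …, i-1`), and put the value `N + 1` in the new box `(i, j)`. -/
def addBox (d : ℕ) (lam : ℕ → ℕ) (i : ℕ) (N : ℕ) (B : ℤ × ℤ → ℕ) : ℤ × ℤ → ℕ :=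
  fun p =>
    if p = ((i : ℤ), (lam i : ℤ) + (i : ℤ) - (d : ℤ)) then N + 1
    else if 1 ≤ p.1 ∧ p.1 < (i : ℤ) ∧ p.2 = (lam i : ℤ) + (i : ℤ) - (d : ℤ) then
      B (p.1, p.2 + 1)
    else if 1 ≤ p.1 ∧ p.1 < (i : ℤ) ∧ p.2 = (lam i : ℤ) + (i : ℤ) - (d : ℤ) + 1 then
      B (p.1, p.2 - 1)
    else B p

/-- Successively apply the box-adding maps along a list of row indices,
tracking the current shape. -/
def FmapAux (d : ℕ) : List ℕ → (ℕ → ℕ) → (ℤ × ℤ → ℕ) → (ℤ × ℤ → ℕ)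
  | [], _, B => B
  | i :: rest, lam, B => FmapAux d rest (stepShape lam i) (addBox d lam i (sizeP d lam) B)

/-- The shape after successively adding boxes along a list of row indices. -/
def shapeAux : List ℕ → (ℕ → ℕ) → (ℕ → ℕ)
  | [], lam => lam
  | i :: rest, lam => shapeAux rest (stepShape lam i)

/-- The list of row indices `1^{μ_1} 2^{μ_2} ⋯ d^{μ_d}` used to pad `λ` to `Z(d,r)`. -/
def rowsList (d r : ℕ) (lam : ℕ → ℕ) : List ℕ :=
  (List.range d).flatMap fun k => List.replicate (muF d r lam (k + 1)) (k + 1)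

/-- `BS(Z(d,r))|_λ`: balanced tableaux of shape `Z(d,r)` such that for each
`i ∈ {1,…,d}` the entries `N + σ_{i-1} + 1, …, N + σ_i` all occur in row `i`. -/
def BSRestricted (d r : ℕ) (lam : ℕ → ℕ) : Set (ℤ × ℤ → ℕ) :=
  {T | IsBalanced d (Zlam d r) T ∧ ∀ i : ℕ, 1 ≤ i → i ≤ d →
    ∀ k : ℕ, sizeP d lam + sigmaF d r lam (i - 1) + 1 ≤ k →
      k ≤ sizeP d lam + sigmaF d r lam i →
      ∃ c : ℤ, ((i : ℤ), c) ∈ Diagram d (Zlam d r) ∧ T ((i : ℤ), c) = k}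

/-- `w ∈ W(B_n)` pattern embeds the signed pattern `v` (given as its one-line
notation, a list of nonzero integers). -/
def PatternEmbeds (n : ℕ) (w : Equiv.Perm ℤ) (v : List ℤ) : Prop :=
  ∃ idx : Fin v.length → ℤ, StrictMono idx ∧
    (∀ j, 1 ≤ idx j ∧ idx j ≤ (n : ℤ)) ∧
    (∀ j, 0 < w (idx j) ↔ 0 < v.get j) ∧
    (∀ j k, |w (idx j)| < |w (idx k)| ↔ |v.get j| < |v.get k|)


lemma cond_count {α : Type*} (val : α → ℕ) (p : α) (H : Set α) (F : Finset α) (K : Finset ℤ)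
    (u v : ℤ → α)
    (hH : ∀ q, q ∈ H ↔ q = p ∨ q ∈ F ∨ (∃ k ∈ K, u k = q) ∨ (∃ k ∈ K, v k = q))
    (hu : Set.InjOn u K) (hv : Set.InjOn v K)
    (huv : ∀ k ∈ K, ∀ l ∈ K, u k ≠ v l)
    (huF : ∀ k ∈ K, u k ∉ F) (hvF : ∀ k ∈ K, v k ∉ F) :
    {q ∈ H | val p < val q}.ncard = (F.filter (fun q => val p < val q)).card
      + (K.filter (fun k => val p < val (u k))).card
      + (K.filter (fun k => val p < val (v k))).card := by
  classical
  have h : {q ∈ H | val p < val q} =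
      (((F.filter (fun q => val p < val q)) ∪ (K.filter (fun k => val p < val (u k))).image u
        ∪ (K.filter (fun k => val p < val (v k))).image v : Finset α) : Set α) := by
    ext q
    simp only [Set.mem_ofPred_eq, hH, Finset.coe_union, Finset.coe_filter, Finset.coe_image,
      Set.mem_union, Set.mem_image]
    constructor
    · rintro ⟨rfl | h | ⟨k, hk, rfl⟩ | ⟨k, hk, rfl⟩, hq⟩
      · exact absurd hq (lt_irrefl _)
      · exact Or.inl (Or.inl ⟨h, hq⟩)
      · exact Or.inl (Or.inr ⟨k, ⟨hk, hq⟩, rfl⟩)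
      · exact Or.inr ⟨k, ⟨hk, hq⟩, rfl⟩
    · rintro ((⟨h, hq⟩ | ⟨k, ⟨hk, hq⟩, rfl⟩) | ⟨k, ⟨hk, hq⟩, rfl⟩)
      · exact ⟨Or.inr (Or.inl h), hq⟩
      · exact ⟨Or.inr (Or.inr (Or.inl ⟨k, hk, rfl⟩)), hq⟩
      · exact ⟨Or.inr (Or.inr (Or.inr ⟨k, hk, rfl⟩)), hq⟩
  rw [h, Set.ncard_coe_finset, Finset.card_union_of_disjoint, Finset.card_union_of_disjoint,
    Finset.card_image_of_injOn, Finset.card_image_of_injOn]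
  · exact hv.mono (by intro k hk; simp at hk; exact hk.1)
  · exact hu.mono (by intro k hk; simp at hk; exact hk.1)
  · rw [Finset.disjoint_left]
    intro a ha hb
    simp only [Finset.mem_filter, Finset.mem_image] at ha hb
    obtain ⟨k, hk, rfl⟩ := hb
    exact huF k hk.1 ha.1
  · rw [Finset.disjoint_left]
    intro a ha hb
    simp only [Finset.mem_filter, Finset.mem_image, Finset.mem_union] at ha hb
    obtain ⟨k, hk, rfl⟩ := hb
    rcases ha with ha | ⟨l, hl, hlk⟩
    · exact hvF k hk.1 ha.1
    · exact huv l hl.1 k hk.1 hlk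

lemma cond_bwd {α : Type*} (val : α → ℕ) (x : ℕ) (F : Finset α) (K : Finset ℤ)
    (u v : ℤ → α)
    (h1 : ∀ q ∈ F, x < val q) (h2 : ∀ k ∈ K, Between x (val (u k)) (val (v k))) :
    (F.filter (fun q => x < val q)).card
      + (K.filter (fun k => x < val (u k))).card
      + (K.filter (fun k => x < val (v k))).card = F.card + K.card := by
  classical
  rw [Finset.filter_true_of_mem h1, add_assoc, ← Finset.card_union_add_card_inter,
    ← Finset.filter_or, ← Finset.filter_and, Finset.filter_true_of_mem, Finset.filter_false_of_mem]
  · simp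
  · intro k hk; have := h2 k hk; unfold Between at this; omega
  · intro k hk; have := h2 k hk; unfold Between at this; omega

lemma cond_fwd {α : Type*} (val : α → ℕ) (x : ℕ) (F : Finset α) (K : Finset ℤ)
    (u v : ℤ → α)
    (hF : ∀ q ∈ F, val q ≠ x) (hu : ∀ k ∈ K, val (u k) ≠ x) (hv : ∀ k ∈ K, val (v k) ≠ x)
    (hc : (F.filter (fun q => x < val q)).card
      + (K.filter (fun k => x < val (u k))).card
      + (K.filter (fun k => x < val (v k))).card = F.card + K.card)
    (h1 : ∀ k ∈ K, x < val (u k) → x < val (v k) → ∀ q ∈ F, val q < x → False)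
    (h2 : ∀ k ∈ K, x < val (u k) → x < val (v k) → ∀ l ∈ K, val (u l) < x → val (v l) < x → False) :
    (∀ q ∈ F, x < val q) ∧ (∀ k ∈ K, Between x (val (u k)) (val (v k))) := by
  classical
  rw [add_assoc, ← Finset.card_union_add_card_inter, ← Finset.filter_or, ← Finset.filter_and] at hc
  by_cases he : ∃ k ∈ K, x < val (u k) ∧ x < val (v k)
  · exfalso
    obtain ⟨k, hk, hk1, hk2⟩ := he
    have e1 : F.filter (fun q => x < val q) = F := by
      apply Finset.filter_true_of_mem
      intro q hq
      have a1 := h1 k hk hk1 hk2 q hq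
      have a2 := hF q hq
      by_contra a3
      exact a1 (by omega)
    have e2 : K.filter (fun k => x < val (u k) ∨ x < val (v k)) = K := by
      apply Finset.filter_true_of_mem
      intro q hq
      have a1 := h2 k hk hk1 hk2 q hq
      have a2 := hu q hq
      have a4 := hv q hq
      by_contra a3
      exact a1 (by omega) (by omega)
    rw [e1, e2] at hc
    have : k ∈ K.filter (fun k => x < val (u k) ∧ x < val (v k)) := by simp [hk, hk1, hk2]
    have := Finset.card_pos.2 ⟨k, this⟩
    omega
  · have e : K.filter (fun k => x < val (u k) ∧ x < val (v k)) = ∅ := by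
      apply Finset.filter_false_of_mem
      intro k hk h
      exact he ⟨k, hk, h⟩
    rw [e, Finset.card_empty] at hc
    have l1 := Finset.card_filter_le F (fun q => x < val q)
    have l2 := Finset.card_filter_le K (fun k => x < val (u k) ∨ x < val (v k))
    have f1 := Finset.card_filter_eq_iff.1
      (show (F.filter (fun q => x < val q)).card = F.card by omega)
    have f2 := Finset.card_filter_eq_iff.1
      (show (K.filter (fun k => x < val (u k) ∨ x < val (v k))).card = K.card by omega)
    refine ⟨fun q hq => f1 q hq, fun k hk => ?_⟩
    have := f2 k hk
    have := hu k hk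
    have := hv k hk
    have : ¬ (x < val (u k) ∧ x < val (v k)) := fun h => he ⟨k, hk, h⟩
    unfold Between
    omega

def psi (r : ℕ) (c : ℤ) : ℤ := if c ≤ 0 then c else r + c

def bx (d r : ℕ) (a c : ℤ) : ℤ × ℤ :=
  if 0 ≤ a + c then ((d : ℤ) + 1 - a, psi r c) else ((d : ℤ) + 1 + c, psi r (-a))

/-- row segment: columns `c+1..r` of the row of `e_i` -/
noncomputable def seg (d r : ℕ) (i c : ℤ) : Finset (ℤ × ℤ) :=
  (Finset.Ioc c (r : ℤ)).image (fun t => ((d : ℤ) + 1 - i, t))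

lemma mem_seg (d r : ℕ) (i c : ℤ) (q : ℤ × ℤ) :
    q ∈ seg d r i c ↔ q.1 = (d : ℤ) + 1 - i ∧ c < q.2 ∧ q.2 ≤ r := by
  simp only [seg, Finset.mem_image, Finset.mem_Ioc]
  constructor
  · rintro ⟨t, ht, rfl⟩; simpa using ht
  · rintro ⟨h1, h2⟩; exact ⟨q.2, h2, by rw [← h1]⟩

lemma card_seg (d r : ℕ) (i c : ℤ) (hc : c ≤ r) : ((seg d r i c).card : ℤ) = r - c := by
  rw [seg, Finset.card_image_of_injective _ (by intro a b h; simpa using h)]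
  simp; omega

lemma mem_diag (d r : ℕ) (a b : ℤ) : (a, b) ∈ Diagram d (Zlam d r) ↔
    1 ≤ a ∧ a ≤ d ∧ a - d ≤ b ∧ b ≤ r + d - a := by
  simp only [Diagram, Zlam, Set.mem_ofPred_eq]
  constructor
  · rintro ⟨h1, h2, h3, h4⟩
    refine ⟨h1, h2, h3, ?_⟩
    omega
  · rintro ⟨h1, h2, h3, h4⟩
    refine ⟨h1, h2, h3, ?_⟩
    omega

lemma mem_exthook (d r : ℕ) (i c a b : ℤ) : (a, b) ∈ ExtHook d (Zlam d r) i c ↔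
    (a = i ∧ b = c) ∨ ((1 ≤ a ∧ a ≤ d ∧ a - d ≤ b ∧ b ≤ r + d - a) ∧
      ((a = i ∧ c < b) ∨ (b = c ∧ i < a) ∨ (c < 0 ∧ a = d + 1 + c))) ∨
      (c < 0 ∧ a = d + 1 + c ∧ b = c) := by
  simp only [ExtHook, Hook, Set.mem_union, Set.mem_singleton_iff, Set.mem_ofPred_eq, mem_diag,
    Prod.mk.injEq]
  tauto

lemma hookA (d r : ℕ) (i j : ℤ) (hj : 1 ≤ j) (hji : j < i) (hi : i ≤ d) (q : ℤ × ℤ) :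
    q ∈ ExtHook d (Zlam d r) (bx d r i j).1 (bx d r i j).2 ↔ q = bx d r i j ∨ q ∈ (∅ : Finset (ℤ × ℤ)) ∨
      (∃ k ∈ Finset.Ioo j i, bx d r i k = q) ∨ (∃ k ∈ Finset.Ioo j i, bx d r k j = q) := by
  obtain ⟨a, b⟩ := q
  rw [mem_exthook]
  constructor
  · intro h
    by_cases h0 : a = d + 1 - i
    · by_cases h1 : b = r + j
      · left; simp only [bx, psi, Prod.mk.injEq] at *; split_ifs at * <;> simp at * <;> omega
      · right; right; left
        refine ⟨b - r, ?_, ?_⟩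
        · simp only [bx, psi, Finset.mem_Ioo] at *; split_ifs at * <;> simp at * <;> omega
        · simp only [bx, psi, Prod.mk.injEq] at *; split_ifs at * <;> simp at * <;> omega
    · right; right; right
      refine ⟨d + 1 - a, ?_, ?_⟩
      · simp only [bx, psi, Finset.mem_Ioo] at *; split_ifs at * <;> simp at * <;> omega
      · simp only [bx, psi, Prod.mk.injEq] at *; split_ifs at * <;> simp at * <;> omega
  · rintro (h | h | ⟨k, hk, h⟩ | ⟨k, hk, h⟩)
    · rw [← h]; simp
    · simp at h
    all_goals
      simp only [bx, psi, Finset.mem_Ioo] at *; split_ifs at * <;> simp at * <;> omega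

lemma hookB (d r : ℕ) (i c : ℤ) (h1i : 1 ≤ i) (hi : i ≤ d) (hc : 0 ≤ c) (hcr : c ≤ r) (q : ℤ × ℤ) :
    q ∈ ExtHook d (Zlam d r) ((d : ℤ) + 1 - i) c ↔ q = ((d : ℤ) + 1 - i, c) ∨ q ∈ seg d r i c ∨
      (∃ k ∈ Finset.Ioo 0 i, bx d r i k = q) ∨
      (∃ k ∈ Finset.Ioo 0 i, ((d : ℤ) + 1 - k, c) = q) := by
  obtain ⟨a, b⟩ := q
  rw [mem_exthook, mem_seg]
  constructor
  · intro h
    by_cases h0 : a = d + 1 - i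
    · by_cases h1 : b = c
      · left; simp; omega
      · by_cases h2 : b ≤ r
        · right; left; dsimp only; omega
        · right; right; left
          refine ⟨b - r, ?_, ?_⟩
          · simp only [Finset.mem_Ioo] at *; omega
          · simp only [bx, psi, Prod.mk.injEq] at *; split_ifs at * <;> simp at * <;> omega
    · right; right; right
      refine ⟨d + 1 - a, ?_, ?_⟩
      · simp only [Finset.mem_Ioo] at *; omega
      · simp only [Prod.mk.injEq] at *; omega
  · rintro (h | h | ⟨k, hk, h⟩ | ⟨k, hk, h⟩)
    · simp at h; simp [h]
    · dsimp only at h; omega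
    all_goals
      simp only [bx, psi, Finset.mem_Ioo] at *; (try split_ifs at *) <;> simp at * <;> omega

lemma hookC (d r : ℕ) (i j : ℤ) (hj : 1 ≤ j) (hji : j < i) (hi : i ≤ d) (q : ℤ × ℤ) :
    q ∈ ExtHook d (Zlam d r) ((d : ℤ) + 1 - i) (-j) ↔ q = ((d : ℤ) + 1 - i, -j) ∨
      q ∈ seg d r i 0 ∪ seg d r j 0 ∨
      (∃ k ∈ Finset.Ioo (-j) i, bx d r i k = q) ∨
      (∃ k ∈ Finset.Ioo (-j) i, bx d r k (-j) = q) := by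
  obtain ⟨a, b⟩ := q
  rw [mem_exthook, Finset.mem_union, mem_seg, mem_seg]
  constructor
  · intro h
    by_cases h0 : a = d + 1 - i
    · by_cases h1 : b = -j
      · left; simp; omega
      · by_cases h2 : 0 < b ∧ b ≤ r
        · right; left; dsimp only; omega
        · right; right; left
          by_cases h3 : b ≤ 0
          · refine ⟨b, ?_, ?_⟩
            · simp only [Finset.mem_Ioo] at *; omega
            · simp only [bx, psi, Prod.mk.injEq] at *; split_ifs at * <;> simp at * <;> omega
          · refine ⟨b - r, ?_, ?_⟩
            · simp only [Finset.mem_Ioo] at *; omega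
            · simp only [bx, psi, Prod.mk.injEq] at *; split_ifs at * <;> simp at * <;> omega
    · by_cases h4 : b = -j
      · right; right; right
        refine ⟨d + 1 - a, ?_, ?_⟩
        · simp only [Finset.mem_Ioo] at *; omega
        · simp only [bx, psi, Prod.mk.injEq] at *; split_ifs at * <;> simp at * <;> omega
      · by_cases h2 : 0 < b ∧ b ≤ r
        · right; left; dsimp only; omega
        · right; right; right
          by_cases h3 : b ≤ 0
          · refine ⟨-b, ?_, ?_⟩
            · simp only [Finset.mem_Ioo] at *; omega
            · simp only [bx, psi, Prod.mk.injEq] at *; split_ifs at * <;> simp at * <;> omega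
          · refine ⟨r - b, ?_, ?_⟩
            · simp only [Finset.mem_Ioo] at *; omega
            · simp only [bx, psi, Prod.mk.injEq] at *; split_ifs at * <;> simp at * <;> omega
  · rintro (h | h | ⟨k, hk, h⟩ | ⟨k, hk, h⟩)
    · simp at h; simp [h]
    · dsimp only at h; omega
    all_goals
      simp only [bx, psi, Finset.mem_Ioo] at *; (try split_ifs at *) <;> simp at * <;> omega

lemma eVec_neg (k : ℤ) : eVec (-k) = -eVec k := by
  funext t
  simp only [eVec, Pi.neg_apply]
  split_ifs <;> omega

lemma eVec_zero : eVec 0 = 0 := by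
  funext t
  simp only [eVec, Pi.zero_apply]
  split_ifs <;> omega

def WB (x y z : ℕ) : Prop := (y ≤ x ∧ x ≤ z) ∨ (z ≤ x ∧ x ≤ y)

lemma coreA (D : ℤ) (β : ℤ → ℤ → ℕ)
    (hA : ∀ i j, 1 ≤ j → j < i → i ≤ D →
      (∀ k, j < k → k < i → β i j < β i k → β i j < β k j →
        ∀ l, j < l → l < i → β i l < β i j → β l j < β i j → False) →
      ∀ k, j < k → k < i → Between (β i j) (β i k) (β k j)) :
    ∀ n : ℕ, ∀ i j, 1 ≤ j → j < i → i ≤ D → i - j ≤ n →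
      ∀ k, j < k → k < i → Between (β i j) (β i k) (β k j) := by
  intro n
  induction n with
  | zero => intro i j _ _ _ h; push_cast at h; omega
  | succ n ih =>
    intro i j hj hji hi hn
    push_cast at hn
    apply hA i j hj hji hi
    intro k hk hki h1 h2 l hl hli h3 h4
    have hne : k ≠ l := by rintro rfl; omega
    rcases lt_or_gt_of_ne hne with h | h
    · have a1 := ih i k (by omega) hki hi (by omega) l h hli
      have a2 := ih l j hj hl (by omega) (by omega) k hk h
      unfold Between at a1 a2
      omega
    · have a1 := ih i l (by omega) hli hi (by omega) k h hki
      have a2 := ih k j hj hk (by omega) (by omega) l hl h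
      unfold Between at a1 a2
      omega

lemma coreB (D R : ℤ) (β G : ℤ → ℤ → ℕ)
    (SA : ∀ i j k, 1 ≤ j → j < k → k < i → i ≤ D → Between (β i j) (β i k) (β k j))
    (hB : ∀ i c, 1 ≤ i → i ≤ D → 0 ≤ c → c ≤ R →
      (∀ k, 0 < k → k < i → G i c < β i k → G i c < G k c →
        ∀ t, c < t → t ≤ R → G i t < G i c → False) →
      (∀ k, 0 < k → k < i → G i c < β i k → G i c < G k c →
        ∀ l, 0 < l → l < i → β i l < G i c → G l c < G i c → False) →
      (∀ t, c < t → t ≤ R → G i c < G i t) ∧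
      ∀ k, 0 < k → k < i → Between (G i c) (β i k) (G k c)) :
    ∀ n : ℕ, ∀ i : ℤ, 1 ≤ i → i ≤ n → i ≤ D → ∀ m : ℕ, ∀ c, 0 ≤ c → c ≤ R → R - c ≤ m →
      (∀ t, c < t → t ≤ R → G i c < G i t) ∧
      ∀ k, 0 < k → k < i → Between (G i c) (β i k) (G k c) := by
  intro n
  induction n with
  | zero => intro i _ _ ; omega
  | succ n ih =>
    intro i hi hin hiD m
    push_cast at hin
    have key : ∀ c, 0 ≤ c → c ≤ R → (∀ t, c < t → t ≤ R →
        (∀ s, t < s → s ≤ R → G i t < G i s) ∧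
        ∀ k, 0 < k → k < i → Between (G i t) (β i k) (G k t)) →
        (∀ t, c < t → t ≤ R → G i c < G i t) ∧
        ∀ k, 0 < k → k < i → Between (G i c) (β i k) (G k c) := by
      intro c hc hcR im
      apply hB i c hi hiD hc hcR
      · intro k hk hki h1 h2 t ht htR h3
        have a1 := (im t ht htR).2 k hk hki
        have a2 := (ih k (by omega) (by omega) (by omega) (R - c).toNat c hc hcR (by omega)).1 t ht htR
        unfold Between at a1
        omega
      · intro k hk hki h1 h2 l hl hli h3 h4
        have hne : k ≠ l := by rintro rfl; omega
        rcases lt_or_gt_of_ne hne with h | h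
        · have a1 := SA i k l (by omega) h hli hiD
          have a2 := (ih l (by omega) (by omega) (by omega) (R - c).toNat c hc hcR (by omega)).2 k hk h
          unfold Between at a1 a2
          omega
        · have a1 := SA i l k (by omega) h hki hiD
          have a2 := (ih k (by omega) (by omega) (by omega) (R - c).toNat c hc hcR (by omega)).2 l hl h
          unfold Between at a1 a2
          omega
    induction m with
    | zero =>
      intro c hc hcR hm
      push_cast at hm
      exact key c hc hcR (fun t h1 h2 => by omega)
    | succ m im =>
      intro c hc hcR hm
      push_cast at hm
      exact key c hc hcR (fun t h1 h2 => im t (by omega) h2 (by omega))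

lemma coreC (D R : ℤ) (hR : 0 ≤ R) (β G : ℤ → ℤ → ℕ)
    (hsymm : ∀ a c, β a c = β (-c) (-a)) (h0 : ∀ a, 1 ≤ a → β a 0 = G a 0)
    (hdiag : ∀ a, 1 ≤ a → β a (-a) = G a 0)
    (SA : ∀ i j k, 1 ≤ j → j < k → k < i → i ≤ D → Between (β i j) (β i k) (β k j))
    (SB : ∀ i c, 1 ≤ i → i ≤ D → 0 ≤ c → c ≤ R →
      (∀ t, c < t → t ≤ R → G i c < G i t) ∧
      ∀ k, 0 < k → k < i → Between (G i c) (β i k) (G k c))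
    (hC : ∀ i j, 1 ≤ j → j < i → i ≤ D →
      (∀ k, -j < k → k < i → β i (-j) < β i k → β i (-j) < β k (-j) →
        ∀ t, 0 < t → t ≤ R → (G i t < β i (-j) → False) ∧ (G j t < β i (-j) → False)) →
      (∀ k, -j < k → k < i → β i (-j) < β i k → β i (-j) < β k (-j) →
        ∀ l, -j < l → l < i → β i l < β i (-j) → β l (-j) < β i (-j) → False) →
      (∀ t, 0 < t → t ≤ R → β i (-j) < G i t ∧ β i (-j) < G j t) ∧
      ∀ k, -j < k → k < i → Between (β i (-j)) (β i k) (β k (-j))) :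
    ∀ n : ℕ, ∀ i j, 1 ≤ j → j < i → i ≤ D → i + j ≤ n →
      (∀ t, 0 < t → t ≤ R → β i (-j) < G i t ∧ β i (-j) < G j t) ∧
      ∀ k, -j < k → k < i → Between (β i (-j)) (β i k) (β k (-j)) := by
  intro n
  induction n with
  | zero => intro i j _ _ _ h; push_cast at h; omega
  | succ n ih =>
    -- weak betweenness, half of the cases
    have W1 : ∀ a m c, c < m → m < a → a ≤ D → 0 ≤ a + c → a - c ≤ n →
        WB (β a c) (β a m) (β m c) := by
      intro a m c hcm hma haD hac hn
      rcases lt_trichotomy c 0 with hc | hc | hc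
      · rcases eq_or_lt_of_le hac with he | he
        · obtain rfl : c = -a := by omega
          have key : ∀ m, 0 < m → m < a → WB (G a 0) (β a m) (β a (-m)) := by
            intro m hm0 hma
            have a1 := (ih a m (by omega) hma haD (by omega)).2 0 (by omega) (by omega)
            have a2 := (SB a 0 (by omega) haD le_rfl hR).2 m hm0 hma
            rw [h0 a (by omega), hsymm 0 (-m), neg_neg, neg_zero, h0 m (by omega)] at a1
            unfold Between at a1 a2
            unfold WB
            omega
          rw [hdiag a (by omega), hsymm m (-a), neg_neg]
          rcases lt_trichotomy m 0 with hm | hm | hm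
          · have := key (-m) (by omega) (by omega)
            rw [neg_neg] at this
            unfold WB at *
            omega
          · subst hm
            rw [neg_zero, h0 a (by omega)]
            unfold WB
            omega
          · exact key m hm hma
        · have := (ih a (-c) (by omega) (by omega) haD (by omega)).2 m (by omega) hma
          rw [neg_neg] at this
          unfold Between at this
          unfold WB
          omega
      · subst hc
        have := (SB a 0 (by omega) haD le_rfl hR).2 m hcm hma
        rw [h0 a (by omega), h0 m (by omega)]
        unfold Between at this
        unfold WB
        omega
      · have := SA a c m (by omega) hcm hma haD
        unfold Between at this
        unfold WB
        omega
    have W : ∀ a m c, -D ≤ c → c < m → m < a → a ≤ D → a - c ≤ n →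
        WB (β a c) (β a m) (β m c) := by
      intro a m c hc hcm hma ha hn
      rcases le_total 0 (a + c) with h | h
      · exact W1 a m c hcm hma ha h hn
      · have := W1 (-c) (-m) (-a) (by omega) (by omega) (by omega) (by omega) (by omega)
        rw [← hsymm a c, ← hsymm m c, ← hsymm a m] at this
        unfold WB at *
        omega
    intro i j hj hji hi hn
    push_cast at hn
    apply hC i j hj hji hi
    · intro k hk hki h1 h2 t ht htR
      rcases lt_trichotomy k 0 with hk0 | hk0 | hk0
      · have a1 := (ih i (-k) (by omega) (by omega) hi (by omega)).1 t ht htR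
        have a2 := (SB j t hj (by omega) (by omega) htR).2 (-k) (by omega) (by omega)
        rw [neg_neg] at a1
        rw [hsymm k (-j), neg_neg] at h2
        unfold Between at a2
        omega
      · subst hk0
        have a1 := (SB i 0 (by omega) hi le_rfl hR).1 t ht htR
        have a2 := (SB j 0 (by omega) (by omega) le_rfl hR).1 t ht htR
        rw [h0 i (by omega)] at h1
        rw [hsymm 0 (-j), neg_neg, neg_zero, h0 j hj] at h2
        omega
      · have a1 := (SB i t (by omega) hi (by omega) htR).2 k hk0 hki
        unfold Between at a1
        rcases lt_trichotomy k j with hkj | hkj | hkj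
        · have a2 := (ih j k (by omega) (by omega) (by omega) (by omega)).1 t ht htR
          rw [hsymm k (-j), neg_neg] at h2
          omega
        · subst hkj
          have a2 := (SB k 0 (by omega) (by omega) le_rfl hR).1 t ht htR
          rw [hdiag k (by omega)] at h2
          omega
        · have a2 := (ih k j (by omega) (by omega) (by omega) (by omega)).1 t ht htR
          omega
    · intro k hk hki h1 h2 l hl hli h3 h4
      have hne : k ≠ l := by rintro rfl; omega
      rcases lt_or_gt_of_ne hne with h | h
      · have a1 := W i l k (by omega) h hli hi (by omega)
        have a2 := W l k (-j) (by omega) hk h (by omega) (by omega)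
        unfold WB at a1 a2
        omega
      · have a1 := W i k l (by omega) h hki hi (by omega)
        have a2 := W k l (-j) (by omega) hl h (by omega) (by omega)
        unfold WB at a1 a2
        omega

lemma ext_of_mem (d r : ℕ) (B : ℤ × ℤ → ℕ) (p : ℤ × ℤ) (hp : p ∈ Diagram d (Zlam d r)) :
    ExtFilling d B p = B p := by
  obtain ⟨a, b⟩ := p
  rw [mem_diag] at hp
  simp only [ExtFilling]
  rw [if_neg (by omega)]

lemma val_ne (d r : ℕ) (B : ℤ × ℤ → ℕ) (hB : IsFilling d (Zlam d r) B) (p q : ℤ × ℤ)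
    (hp : p ∈ Diagram d (Zlam d r)) (hq : q ∈ ExtHook d (Zlam d r) p.1 p.2) (hne : q ≠ p) :
    ExtFilling d B q ≠ ExtFilling d B p := by
  rw [ext_of_mem d r B p hp]
  have inj := hB.1.injOn
  by_cases hqd : q ∈ Diagram d (Zlam d r)
  · rw [ext_of_mem d r B q hqd]
    exact fun h => hne (inj hqd hp h)
  · obtain ⟨a, b⟩ := p
    obtain ⟨a', b'⟩ := q
    rw [mem_diag] at hqd
    have hp' := hp
    rw [mem_diag] at hp'
    rw [mem_exthook] at hq
    simp only [ne_eq, Prod.mk.injEq] at hne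
    simp only [ExtFilling]
    rw [if_pos (by omega)]
    intro h
    have := inj ((mem_diag d r a' 0).2 (by omega)) hp h
    simp only [Prod.mk.injEq] at this
    omega

lemma box (d r : ℕ) (B : ℤ × ℤ → ℕ) (hB : IsFilling d (Zlam d r) B) (p : ℤ × ℤ)
    (hp : p ∈ Diagram d (Zlam d r)) (F : Finset (ℤ × ℤ)) (K : Finset ℤ) (u v : ℤ → ℤ × ℤ)
    (hH : ∀ q, q ∈ ExtHook d (Zlam d r) p.1 p.2 ↔
      q = p ∨ q ∈ F ∨ (∃ k ∈ K, u k = q) ∨ (∃ k ∈ K, v k = q))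
    (hu : Set.InjOn u K) (hv : Set.InjOn v K)
    (huv : ∀ k ∈ K, ∀ l ∈ K, u k ≠ v l)
    (huF : ∀ k ∈ K, u k ∉ F) (hvF : ∀ k ∈ K, v k ∉ F)
    (hpF : p ∉ F) (hpu : ∀ k ∈ K, u k ≠ p) (hpv : ∀ k ∈ K, v k ≠ p)
    (hcard : (F.card : ℤ) + K.card = rk d (Zlam d r) p.1 p.2 - 1)
    (val : ℤ × ℤ → ℕ) (hval : val = ExtFilling d B) :
    (((∀ q ∈ F, val p < val q) ∧ (∀ k ∈ K, Between (val p) (val (u k)) (val (v k)))) →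
      ({q ∈ ExtHook d (Zlam d r) p.1 p.2 | B p < ExtFilling d B q}.ncard : ℤ) =
      rk d (Zlam d r) p.1 p.2 - 1) ∧
    (({q ∈ ExtHook d (Zlam d r) p.1 p.2 | B p < ExtFilling d B q}.ncard : ℤ) =
      rk d (Zlam d r) p.1 p.2 - 1 →
     (∀ k ∈ K, val p < val (u k) → val p < val (v k) → ∀ q ∈ F, val q < val p → False) →
     (∀ k ∈ K, val p < val (u k) → val p < val (v k) →
        ∀ l ∈ K, val (u l) < val p → val (v l) < val p → False) →
     (∀ q ∈ F, val p < val q) ∧ (∀ k ∈ K, Between (val p) (val (u k)) (val (v k)))) := by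
  have hc := cond_count val p _ F K u v hH hu hv huv huF hvF
  have hne : ∀ q, q ∈ ExtHook d (Zlam d r) p.1 p.2 → q ≠ p → val q ≠ val p := by
    intro q h1 h2; rw [hval]; exact val_ne d r B hB p q hp h1 h2
  rw [← hcard, ← ext_of_mem d r B p hp, ← hval, hc]
  constructor
  · rintro ⟨h1, h2⟩
    exact_mod_cast cond_bwd val (val p) F K u v h1 h2
  · intro h h1 h2
    refine cond_fwd val (val p) F K u v ?_ ?_ ?_ (by exact_mod_cast h) h1 h2
    · intro q hq
      exact hne q ((hH q).2 (Or.inr (Or.inl hq))) (by rintro rfl; exact hpF hq)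
    · intro k hk
      exact hne _ ((hH _).2 (Or.inr (Or.inr (Or.inl ⟨k, hk, rfl⟩)))) (hpu k hk)
    · intro k hk
      exact hne _ ((hH _).2 (Or.inr (Or.inr (Or.inr ⟨k, hk, rfl⟩)))) (hpv k hk)

lemma rk_Z (d r : ℕ) (a c : ℤ) (h : 1 ≤ a) (h2 : a ≤ d) (hc : a - d ≤ c) :
    rk d (Zlam d r) a c = if 0 ≤ c then (r : ℤ) + d + 1 - a - c else 2 * r + d + 1 - a - c := by
  simp only [rk, Zlam]
  split_ifs <;> omega

/-- value of the root `e_a - e_c`. -/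
def bet (d r : ℕ) (B : ℤ × ℤ → ℕ) (a c : ℤ) : ℕ := ExtFilling d B (bx d r a c)
/-- value of row `a`, column `c`. -/
def gam (d : ℕ) (B : ℤ × ℤ → ℕ) (a c : ℤ) : ℕ := ExtFilling d B ((d : ℤ) + 1 - a, c)

/-- Balance at a given box. -/
def Bal (d r : ℕ) (B : ℤ × ℤ → ℕ) (p : ℤ × ℤ) : Prop :=
    ({q ∈ ExtHook d (Zlam d r) p.1 p.2 | B p < ExtFilling d B q}.ncard : ℤ) =
      rk d (Zlam d r) p.1 p.2 - 1

set_option maxHeartbeats 1000000 in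
lemma boxA (d r : ℕ) (B : ℤ × ℤ → ℕ) (hB : IsFilling d (Zlam d r) B)
    (i j : ℤ) (hj : 1 ≤ j) (hji : j < i) (hi : i ≤ d)
    (β : ℤ → ℤ → ℕ) (hβ : β = bet d r B) :
    ((∀ k, j < k → k < i → Between (β i j) (β i k) (β k j)) → Bal d r B (bx d r i j)) ∧
    (Bal d r B (bx d r i j) →
      (∀ k, j < k → k < i → β i j < β i k → β i j < β k j →
        ∀ l, j < l → l < i → β i l < β i j → β l j < β i j → False) →
      ∀ k, j < k → k < i → Between (β i j) (β i k) (β k j)) := by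
  have e : bx d r i j = ((d : ℤ) + 1 - i, (r : ℤ) + j) := by
    simp only [bx, psi]; split_ifs <;> simp <;> omega
  have := box d r B hB (bx d r i j) (by rw [e, mem_diag]; omega) ∅ (Finset.Ioo j i)
    (fun k => bx d r i k) (fun k => bx d r k j) (hookA d r i j hj hji hi)
    (by
      clear hβ hB; try clear hG
      intro k hk l hl h
      simp only [bx, psi, Finset.coe_Ioo, Set.mem_Ioo] at *
      split_ifs at h <;> simp at h hk <;> omega)
    (by
      clear hβ hB; try clear hG
      intro k hk l hl h
      simp only [bx, psi, Finset.coe_Ioo, Set.mem_Ioo] at *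
      split_ifs at h <;> simp at h hk <;> omega)
    (by
      clear hβ hB; try clear hG
      intro k hk l hl h
      simp only [bx, psi, Finset.mem_Ioo] at *
      split_ifs at h <;> simp at h hk <;> omega)
    (by simp) (by simp) (by simp)
    (by
      clear hβ hB; try clear hG
      intro k hk h
      rw [e] at h
      simp only [bx, psi, Finset.mem_Ioo] at *
      split_ifs at h <;> simp at h hk <;> omega)
    (by
      clear hβ hB; try clear hG
      intro k hk h
      rw [e] at h
      simp only [bx, psi, Finset.mem_Ioo] at *
      split_ifs at h <;> simp at h hk <;> omega)
    (by
      rw [e, rk_Z _ _ _ _ (by simp; omega) (by simp; omega) (by simp; omega)]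
      rw [if_pos (by simp; omega)]; simp; omega)
    _ rfl
  subst hβ
  simp only [Finset.mem_Ioo, Finset.notMem_empty, false_imp_iff, implies_true, true_and,
    and_imp] at this
  refine ⟨this.1, fun h1 h2 => this.2 h1 (by simp) (fun k a b c d l a' b' c' d' => h2 k a b c d l a' b' c' d')⟩

set_option maxHeartbeats 1000000 in
lemma boxB (d r : ℕ) (B : ℤ × ℤ → ℕ) (hB : IsFilling d (Zlam d r) B)
    (i c : ℤ) (h1i : 1 ≤ i) (hi : i ≤ d) (hc : 0 ≤ c) (hcr : c ≤ r)
    (β G : ℤ → ℤ → ℕ) (hβ : β = bet d r B) (hG : G = gam d B) :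
    (((∀ t, c < t → t ≤ r → G i c < G i t) ∧
      ∀ k, 0 < k → k < i → Between (G i c) (β i k) (G k c)) → Bal d r B ((d : ℤ) + 1 - i, c)) ∧
    (Bal d r B ((d : ℤ) + 1 - i, c) →
      (∀ k, 0 < k → k < i → G i c < β i k → G i c < G k c →
        ∀ t, c < t → t ≤ r → G i t < G i c → False) →
      (∀ k, 0 < k → k < i → G i c < β i k → G i c < G k c →
        ∀ l, 0 < l → l < i → β i l < G i c → G l c < G i c → False) →
      (∀ t, c < t → t ≤ r → G i c < G i t) ∧
      ∀ k, 0 < k → k < i → Between (G i c) (β i k) (G k c)) := by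
  have := box d r B hB ((d : ℤ) + 1 - i, c) (by rw [mem_diag]; omega) (seg d r i c) (Finset.Ioo 0 i)
    (fun k => bx d r i k) (fun k => ((d : ℤ) + 1 - k, c)) (hookB d r i c h1i hi hc hcr)
    (by
      clear hβ hB; try clear hG
      intro k hk l hl h
      simp only [bx, psi, Finset.coe_Ioo, Set.mem_Ioo] at *
      split_ifs at h <;> simp at h hk <;> omega)
    (by
      clear hβ hB; try clear hG
      intro k hk l hl h
      simp at h
      omega)
    (by
      clear hβ hB; try clear hG
      intro k hk l hl h
      simp only [bx, psi, Finset.mem_Ioo] at *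
      split_ifs at h <;> simp at h hk <;> omega)
    (by
      clear hβ hB; try clear hG
      intro k hk h
      rw [mem_seg] at h
      simp only [bx, psi, Finset.mem_Ioo] at *
      split_ifs at h <;> simp at h hk <;> omega)
    (by
      clear hβ hB; try clear hG
      intro k hk h
      rw [mem_seg] at h
      simp at *)
    (by rw [mem_seg]; simp)
    (by
      clear hβ hB; try clear hG
      intro k hk h
      simp only [bx, psi, Finset.mem_Ioo] at *
      split_ifs at h <;> simp at h hk <;> omega)
    (by
      clear hβ hB; try clear hG
      intro k hk h
      simp at *
      omega)
    (by
      rw [card_seg d r i c hcr, rk_Z _ _ _ _ (by simp; omega) (by simp; omega) (by simp; omega)]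
      rw [if_pos (by simp; omega)]; simp; omega)
    _ rfl
  subst hβ hG
  simp only [Finset.mem_Ioo, mem_seg, and_imp] at this
  have fa : (∀ t, c < t → t ≤ r → gam d B i c < gam d B i t) ↔
    (∀ q : ℤ × ℤ, q.1 = (d : ℤ) + 1 - i → c < q.2 → q.2 ≤ r →
      ExtFilling d B ((d : ℤ) + 1 - i, c) < ExtFilling d B q) := by
    constructor
    · rintro h ⟨a, b⟩ h1 h2 h3
      simp only at h1 h2 h3
      subst h1
      exact h b h2 h3
    · intro h t h2 h3
      exact h (_, t) rfl h2 h3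
  rw [fa]
  refine ⟨fun h => this.1 h.1 h.2, fun h1 h2 h3 => this.2 h1 ?_ h3⟩
  rintro k a1 a2 a3 a4 ⟨a, b⟩ b1 b2 b3 b4
  simp only at b1 b2 b3
  subst b1
  exact h2 k a1 a2 a3 a4 b b2 b3 b4

set_option maxHeartbeats 1000000 in
lemma boxC (d r : ℕ) (B : ℤ × ℤ → ℕ) (hB : IsFilling d (Zlam d r) B)
    (i j : ℤ) (hj : 1 ≤ j) (hji : j < i) (hi : i ≤ d)
    (β G : ℤ → ℤ → ℕ) (hβ : β = bet d r B) (hG : G = gam d B) :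
    (((∀ t, 0 < t → t ≤ (r : ℤ) → β i (-j) < G i t ∧ β i (-j) < G j t) ∧
      ∀ k, -j < k → k < i → Between (β i (-j)) (β i k) (β k (-j))) →
      Bal d r B ((d : ℤ) + 1 - i, -j)) ∧
    (Bal d r B ((d : ℤ) + 1 - i, -j) →
      (∀ k, -j < k → k < i → β i (-j) < β i k → β i (-j) < β k (-j) →
        ∀ t, 0 < t → t ≤ (r : ℤ) → (G i t < β i (-j) → False) ∧ (G j t < β i (-j) → False)) →
      (∀ k, -j < k → k < i → β i (-j) < β i k → β i (-j) < β k (-j) →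
        ∀ l, -j < l → l < i → β i l < β i (-j) → β l (-j) < β i (-j) → False) →
      (∀ t, 0 < t → t ≤ (r : ℤ) → β i (-j) < G i t ∧ β i (-j) < G j t) ∧
      ∀ k, -j < k → k < i → Between (β i (-j)) (β i k) (β k (-j))) := by
  have e : bx d r i (-j) = ((d : ℤ) + 1 - i, -j) := by
    simp only [bx, psi]; split_ifs <;> simp <;> omega
  have := box d r B hB ((d : ℤ) + 1 - i, -j) (by rw [mem_diag]; omega)
    (seg d r i 0 ∪ seg d r j 0) (Finset.Ioo (-j) i)
    (fun k => bx d r i k) (fun k => bx d r k (-j)) (hookC d r i j hj hji hi)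
    (by
      clear hβ hB; try clear hG
      intro k hk l hl h
      simp only [bx, psi, Finset.coe_Ioo, Set.mem_Ioo] at *
      split_ifs at h <;> simp at h hk <;> omega)
    (by
      clear hβ hB; try clear hG
      intro k hk l hl h
      simp only [bx, psi, Finset.coe_Ioo, Set.mem_Ioo] at *
      split_ifs at h <;> simp at h hk <;> omega)
    (by
      clear hβ hB; try clear hG
      intro k hk l hl h
      simp only [bx, psi, Finset.mem_Ioo] at *
      split_ifs at h <;> simp at h hk <;> omega)
    (by
      clear hβ hB; try clear hG
      intro k hk h
      rw [Finset.mem_union, mem_seg, mem_seg] at h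
      simp only [bx, psi, Finset.mem_Ioo] at *
      split_ifs at h <;> simp at h hk <;> omega)
    (by
      clear hβ hB; try clear hG
      intro k hk h
      rw [Finset.mem_union, mem_seg, mem_seg] at h
      simp only [bx, psi, Finset.mem_Ioo] at *
      split_ifs at h <;> simp at h hk <;> omega)
    (by rw [Finset.mem_union, mem_seg, mem_seg]; simp; omega)
    (by
      clear hβ hB; try clear hG
      intro k hk h
      simp only [bx, psi, Finset.mem_Ioo] at *
      split_ifs at h <;> simp at h hk <;> omega)
    (by
      clear hβ hB; try clear hG
      intro k hk h
      simp only [bx, psi, Finset.mem_Ioo] at *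
      split_ifs at h <;> simp at h hk <;> omega)
    (by
      rw [Finset.card_union_of_disjoint, Nat.cast_add, card_seg d r i 0 (by simp),
        card_seg d r j 0 (by simp),
        rk_Z _ _ _ _ (by simp; omega) (by simp; omega) (by simp; omega)]
      · rw [if_neg (by simp; omega)]; simp; omega
      · rw [Finset.disjoint_left]
        intro q h1 h2
        rw [mem_seg] at h1 h2
        omega)
    _ rfl
  subst hβ hG
  rw [← e] at this ⊢
  simp only [Finset.mem_Ioo, Finset.mem_union, mem_seg, and_imp] at this
  have fa : (∀ t, 0 < t → t ≤ (r : ℤ) → bet d r B i (-j) < gam d B i t ∧ bet d r B i (-j) < gam d B j t) ↔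
    (∀ q : ℤ × ℤ, (q.1 = (d : ℤ) + 1 - i ∧ 0 < q.2 ∧ q.2 ≤ r) ∨
      (q.1 = (d : ℤ) + 1 - j ∧ 0 < q.2 ∧ q.2 ≤ r) →
      ExtFilling d B (bx d r i (-j)) < ExtFilling d B q) := by
    constructor
    · rintro h ⟨a, b⟩ (⟨h1, h2, h3⟩ | ⟨h1, h2, h3⟩)
      · simp only at h1 h2 h3
        subst h1
        exact (h b h2 h3).1
      · simp only at h1 h2 h3
        subst h1
        exact (h b h2 h3).2
    · intro h t h2 h3
      exact ⟨h (_, t) (Or.inl ⟨rfl, h2, h3⟩), h (_, t) (Or.inr ⟨rfl, h2, h3⟩)⟩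
  rw [fa]
  refine ⟨fun h => this.1 h.1 h.2, fun h1 h2 h3 => this.2 h1 ?_ h3⟩
  rintro k a1 a2 a3 a4 ⟨a, b⟩ (⟨b1, b2, b3⟩ | ⟨b1, b2, b3⟩) b4
  · simp only at b1 b2 b3
    subst b1
    exact (h2 k a1 a2 a3 a4 b b2 b3).1 b4
  · simp only at b1 b2 b3
    subst b1
    exact (h2 k a1 a2 a3 a4 b b2 b3).2 b4

lemma bet_symm (d r : ℕ) (B : ℤ × ℤ → ℕ) (a c : ℤ) : bet d r B a c = bet d r B (-c) (-a) := by
  unfold bet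
  congr 1
  by_cases h : a + c = 0
  · obtain rfl : c = -a := by omega
    simp
  · simp only [bx, psi]; split_ifs <;> simp <;> omega

lemma bet_zero (d r : ℕ) (B : ℤ × ℤ → ℕ) (a : ℤ) (ha : 1 ≤ a) :
    bet d r B a 0 = gam d B a 0 := by
  simp only [bet, gam, bx, psi]
  rw [if_pos (by omega), if_pos (by omega)]

lemma bet_diag (d r : ℕ) (B : ℤ × ℤ → ℕ) (a : ℤ) (ha : 1 ≤ a) :
    bet d r B a (-a) = gam d B a 0 := by
  simp only [bet, gam, bx, psi]
  rw [if_pos (by omega), if_pos (by omega)]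
  simp only [ExtFilling]
  rw [if_pos (by omega), if_neg (by omega)]

lemma btil_bet (d r : ℕ) (B : ℤ × ℤ → ℕ) (btil : (ℤ → ℤ) → ℕ)
    (hbtil : ∀ p ∈ ExtDiagram d (Zlam d r), btil (fExtLabel d r p) = ExtFilling d B p)
    (a c : ℤ) (hc : -(d : ℤ) ≤ c) (hca : c < a) (ha : a ≤ d) :
    btil (eVec a - eVec c) = bet d r B a c := by
  have main : ∀ a c : ℤ, c < a → a ≤ d → 0 ≤ a + c →
      btil (eVec a - eVec c) = bet d r B a c := by
    intro a c hca ha hac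
    unfold bet
    have hmem : bx d r a c ∈ ExtDiagram d (Zlam d r) := by
      simp only [bx, ExtDiagram, Set.mem_union]
      rw [if_pos hac, mem_diag]
      simp only [psi, Set.mem_ofPred_eq]
      split_ifs <;> omega
    rw [← hbtil _ hmem]
    congr 1
    simp only [bx]
    rw [if_pos hac]
    simp only [fExtLabel, fLabel]
    have e1 : (d : ℤ) + 1 - ((d : ℤ) + 1 - a) = a := by ring
    rw [e1]
    by_cases h : c = -a
    · subst h
      rw [if_pos (by simp only [psi]; split_ifs <;> omega), eVec_neg, two_smul, sub_neg_eq_add]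
    · rw [if_neg (by simp only [psi]; split_ifs <;> omega)]
      by_cases h2 : c ≤ 0
      · have : psi r c = c := by simp [psi, h2]
        rw [this, if_pos h2]
      · have : psi r c = r + c := by simp [psi, h2]
        rw [this, if_neg (by omega), if_neg (by omega)]
        congr 2
        ring
  rcases le_total 0 (a + c) with h | h
  · exact main a c hca ha h
  · rw [bet_symm, ← main (-c) (-a) (by omega) (by omega) (by omega), eVec_neg, eVec_neg]
    congr 1
    ring

lemma btil_gam (d r : ℕ) (B : ℤ × ℤ → ℕ) (btil : (ℤ → ℤ) → ℕ)
    (hbtil : ∀ p ∈ ExtDiagram d (Zlam d r), btil (fExtLabel d r p) = ExtFilling d B p)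
    (a t : ℤ) (h1 : 1 ≤ a) (ha : a ≤ d) (ht : 0 < t) (htr : t ≤ r) :
    btil (eVec a + eVec (d + t)) = gam d B a t := by
  unfold gam
  rw [← hbtil _ (by
    simp only [ExtDiagram, Set.mem_union, mem_diag]
    left; omega)]
  congr 1
  simp only [fExtLabel, fLabel]
  rw [if_neg (by omega), if_neg (by omega), if_pos (by omega)]
  congr 2 <;> ring

/-- the strongly balanced conditions. A bijective filling `B` of
`D(Z(d,r))` is balanced if and only if the four families of conditions hold,
expressed via any function `btil` with `btil(f̃(x)) = B̃(x)` for all `x` in the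
extended diagram. -/
theorem balanced_iff_strongly_balanced (d r : ℕ) (hd : 1 ≤ d)
    (B : ℤ × ℤ → ℕ) (hB : IsFilling d (Zlam d r) B)
    (btil : (ℤ → ℤ) → ℕ)
    (hbtil : ∀ p ∈ ExtDiagram d (Zlam d r), btil (fExtLabel d r p) = ExtFilling d B p) :
    IsBalanced d (Zlam d r) B ↔
      ((∀ i j k : ℤ, 1 ≤ j → j < k → k < i → i ≤ (d : ℤ) →
          Between (btil (eVec i - eVec j)) (btil (eVec i - eVec k))
            (btil (eVec k - eVec j))) ∧
       (∀ i p : ℤ, 1 ≤ i → i ≤ (d : ℤ) → (d : ℤ) < p → p ≤ (d : ℤ) + (r : ℤ) →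
          (∀ q : ℤ, p < q → q ≤ (d : ℤ) + (r : ℤ) →
            btil (eVec i + eVec p) < btil (eVec i + eVec q)) ∧
          (∀ k : ℤ, 1 ≤ k → k < i →
            Between (btil (eVec i + eVec p)) (btil (eVec i - eVec k))
              (btil (eVec k + eVec p)))) ∧
       (∀ i : ℤ, 1 ≤ i → i ≤ (d : ℤ) →
          (∀ q : ℤ, (d : ℤ) < q → q ≤ (d : ℤ) + (r : ℤ) →
            btil (eVec i) < btil (eVec i + eVec q)) ∧
          (∀ k : ℤ, 1 ≤ k → k < i →
            Between (btil (eVec i)) (btil (eVec i - eVec k)) (btil (eVec k)))) ∧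
       (∀ i j : ℤ, 1 ≤ j → j < i → i ≤ (d : ℤ) →
          (∀ q : ℤ, (d : ℤ) < q → q ≤ (d : ℤ) + (r : ℤ) →
            btil (eVec i + eVec j) < btil (eVec i + eVec q)) ∧
          (∀ q : ℤ, (d : ℤ) < q → q ≤ (d : ℤ) + (r : ℤ) →
            btil (eVec i + eVec j) < btil (eVec j + eVec q)) ∧
          (∀ k : ℤ, -j < k → k < i →
            Between (btil (eVec i + eVec j)) (btil (eVec i - eVec k))
              (btil (eVec j + eVec k))))) := by
  have hb := btil_bet d r B btil hbtil
  have hg := btil_gam d r B btil hbtil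
  have hg' : ∀ a q : ℤ, 1 ≤ a → a ≤ d → (d : ℤ) < q → q ≤ (d : ℤ) + r →
      btil (eVec a + eVec q) = gam d B a (q - d) := by
    intro a q h1 h2 h3 h4
    rw [← hg a (q - d) h1 h2 (by omega) (by omega)]
    congr 3
    ring
  have hz : ∀ a : ℤ, 1 ≤ a → a ≤ d → btil (eVec a) = gam d B a 0 := by
    intro a h1 h2
    rw [← bet_zero d r B a h1, ← hb a 0 (by omega) (by omega) h2, eVec_zero, sub_zero]
  have hbp : ∀ a c : ℤ, c ≤ d → -c < a → a ≤ d → btil (eVec a + eVec c) = bet d r B a (-c) := by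
    intro a c h1 h2 h3
    rw [← hb a (-c) (by omega) h2 h3, eVec_neg, sub_neg_eq_add]
  constructor
  · rintro ⟨-, hbal⟩
    have hbal' : ∀ a b : ℤ, 1 ≤ a → a ≤ d → a - d ≤ b → b ≤ r + d - a → Bal d r B (a, b) :=
      fun a b h1 h2 h3 h4 => hbal (a, b) ((mem_diag d r a b).2 ⟨h1, h2, h3, h4⟩)
    have SA' := coreA d (bet d r B) (by
      intro i j hj hji hi
      refine (boxA d r B hB i j hj hji hi _ rfl).2 ?_
      have e : bx d r i j = ((d : ℤ) + 1 - i, (r : ℤ) + j) := by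
        simp only [bx, psi]; split_ifs <;> simp <;> omega
      rw [e]
      apply hbal' <;> omega)
    have SA : ∀ i j k, 1 ≤ j → j < k → k < i → i ≤ (d : ℤ) →
        Between (bet d r B i j) (bet d r B i k) (bet d r B k j) :=
      fun i j k h1 h2 h3 h4 => SA' (i - j).toNat i j h1 (by omega) h4 (by omega) k h2 h3
    have SB' := coreB d r (bet d r B) (gam d B) SA (by
      intro i c h1 h2 h3 h4
      refine (boxB d r B hB i c h1 h2 h3 h4 _ _ rfl rfl).2 ?_
      apply hbal' <;> omega)
    have SB := fun i c h1 h2 h3 h4 =>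
      SB' d i h1 h2 h2 r c h3 h4 (by omega)
    have SC' := coreC d r (by omega) (bet d r B) (gam d B) (bet_symm d r B) (bet_zero d r B)
      (bet_diag d r B) SA SB (by
        intro i j hj hji hi
        refine (boxC d r B hB i j hj hji hi _ _ rfl rfl).2 ?_
        apply hbal' <;> omega)
    have SC := fun i j h1 h2 h3 => SC' (i + j).toNat i j h1 h2 h3 (by omega)
    refine ⟨?_, ?_, ?_, ?_⟩
    · intro i j k h1 h2 h3 h4
      rw [hb i j (by omega) (by omega) (by omega), hb i k (by omega) (by omega) (by omega),
        hb k j (by omega) (by omega) (by omega)]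
      exact SA i j k h1 h2 h3 h4
    · intro i p h1 h2 h3 h4
      have := SB i (p - d) h1 h2 (by omega) (by omega)
      refine ⟨fun q h5 h6 => ?_, fun k h5 h6 => ?_⟩
      · rw [hg' i p h1 h2 h3 h4, hg' i q h1 h2 (by omega) h6]
        exact this.1 (q - d) (by omega) (by omega)
      · rw [hg' i p h1 h2 h3 h4, hb i k (by omega) h6 h2, hg' k p h5 (by omega) h3 h4]
        exact this.2 k (by omega) h6
    · intro i h1 h2
      have := SB i 0 h1 h2 (by omega) (by omega)
      refine ⟨fun q h5 h6 => ?_, fun k h5 h6 => ?_⟩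
      · rw [hz i h1 h2, hg' i q h1 h2 (by omega) h6]
        exact this.1 (q - d) (by omega) (by omega)
      · rw [hz i h1 h2, hb i k (by omega) h6 h2, hz k h5 (by omega)]
        exact this.2 k (by omega) h6
    · intro i j h1 h2 h3
      have := SC i j h1 h2 h3
      rw [hbp i j (by omega) (by omega) h3]
      refine ⟨fun q h5 h6 => ?_, fun q h5 h6 => ?_, fun k h5 h6 => ?_⟩
      · rw [hg' i q (by omega) h3 h5 h6]
        exact (this.1 (q - d) (by omega) (by omega)).1
      · rw [hg' j q (by omega) (by omega) h5 h6]
        exact (this.1 (q - d) (by omega) (by omega)).2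
      · rw [hb i k (by omega) h6 h3, add_comm (eVec j), hbp k j (by omega) h5 (by omega)]
        exact this.2 k h5 h6
  · rintro ⟨h1, h2, h3, h4⟩
    refine ⟨hB, ?_⟩
    rintro ⟨a, b⟩ hp
    rw [mem_diag] at hp
    obtain ⟨i, rfl⟩ : ∃ i, a = (d : ℤ) + 1 - i := ⟨d + 1 - a, by ring⟩
    change Bal d r B _
    by_cases hb0 : b < 0
    · obtain ⟨j, rfl⟩ : ∃ j, b = -j := ⟨-b, by ring⟩
      refine (boxC d r B hB i j (by omega) (by omega) (by omega) _ _ rfl rfl).1 ?_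
      have := h4 i j (by omega) (by omega) (by omega)
      rw [hbp i j (by omega) (by omega) (by omega)] at this
      refine ⟨fun t ht htr => ?_, fun k h5 h6 => ?_⟩
      · rw [← hg i t (by omega) (by omega) ht htr, ← hg j t (by omega) (by omega) ht htr]
        exact ⟨this.1 _ (by omega) (by omega), this.2.1 _ (by omega) (by omega)⟩
      · have := this.2.2 k h5 h6
        rwa [hb i k (by omega) h6 (by omega), add_comm (eVec j),
          hbp k j (by omega) h5 (by omega)] at this
    · by_cases hbr : b ≤ r
      · refine (boxB d r B hB i b (by omega) (by omega) (by omega) (by omega) _ _ rfl rfl).1 ?_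
        by_cases hb1 : b = 0
        · subst hb1
          have := h3 i (by omega) (by omega)
          refine ⟨fun t ht htr => ?_, fun k h5 h6 => ?_⟩
          · rw [← hg i t (by omega) (by omega) (by omega) htr, ← hz i (by omega) (by omega)]
            exact this.1 _ (by omega) (by omega)
          · rw [← hb i k (by omega) h6 (by omega), ← hz i (by omega) (by omega),
              ← hz k (by omega) (by omega)]
            exact this.2 k (by omega) h6
        · have := h2 i (d + b) (by omega) (by omega) (by omega) (by omega)
          refine ⟨fun t ht htr => ?_, fun k h5 h6 => ?_⟩
          · rw [← hg i t (by omega) (by omega) (by omega) htr,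
              ← hg i b (by omega) (by omega) (by omega) hbr]
            exact this.1 _ (by omega) (by omega)
          · rw [← hb i k (by omega) h6 (by omega), ← hg i b (by omega) (by omega) (by omega) hbr,
              ← hg k b (by omega) (by omega) (by omega) hbr]
            exact this.2 k (by omega) h6
      · obtain ⟨j, rfl⟩ : ∃ j, b = (r : ℤ) + j := ⟨b - r, by ring⟩
        have e : bx d r i j = ((d : ℤ) + 1 - i, (r : ℤ) + j) := by
          simp only [bx, psi]; split_ifs <;> simp <;> omega
        rw [← e]
        refine (boxA d r B hB i j (by omega) (by omega) (by omega) _ rfl).1 ?_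
        intro k h5 h6
        rw [← hb i j (by omega) (by omega) (by omega), ← hb i k (by omega) (by omega) (by omega),
          ← hb k j (by omega) (by omega) (by omega)]
        exact h1 i j k (by omega) h5 h6 (by omega)

end BST
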